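/- arXiv:2207.02065 — 2 statements merged into one kernel-verified Lean document; each statement's English description precedes it below -/
import Mathlib

section
/- Let I be a φ-δ-S-primary ideal of R associated to s ∈ S such that (I : s) = (δ(I) : s). If I is not a δ-S-primary ideal of R associated to s, then sI·√(φ(I)) ⊆ φ(I); that is, for every x ∈ I and every a ∈ √(φ(I)), we have sxa ∈ φ(I). -/
/-!
Put `J = (I : s)`, which also equals `(δ I : s)`; so a product lying in `I \ φ I` has a factor in
`J`. If `b * c ∈ I` with `b, c ∉ J`, then `b * c ∈ φ I`, and perturbing `c` by an element of
`I ⊆ J` gives `b I ⊆ φ I` (`mul_mem_phi_of_not_mem`). Perturbing both factors of a pair witnessing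
that `I` is not `δ`-`S`-primary gives `I ^ 2 ⊆ φ I`.

Let `x ∈ I` and `a ^ n ∈ φ I`, and suppose `s * (x * a) ∉ φ I`. Since `I ^ 2 ⊆ φ I`, `a ∉ J`.
As `s ^ 2 ∉ J` and `a I ⊄ φ I`, also `a * s ^ 2 ∉ I`, that is `s * a ∉ J`. As `(s * a) I ⊄ φ I`,
`s * a ^ (m + 1) ∈ I` forces `a ^ m ∈ J`, that is `s * a ^ m ∈ I`. Descending from
`s * a ^ n ∈ I` yields `s ∈ I`, contradicting `I ∩ S = ∅`.
-/


/-- An expansion function of ideals: `I ⊆ δ I` and monotone. -/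
def IsIdealExpansion {R : Type*} [CommRing R] (δ : Ideal R → Ideal R) : Prop :=
  (∀ I : Ideal R, I ≤ δ I) ∧ ∀ I J : Ideal R, J ≤ I → δ J ≤ δ I

/-- A reduction function of ideals: `φ I ⊆ I` and monotone. -/
def IsIdealReduction {R : Type*} [CommRing R] (φ : Ideal R → Ideal R) : Prop :=
  (∀ I : Ideal R, φ I ≤ I) ∧ ∀ P Q : Ideal R, P ≤ Q → φ P ≤ φ Q

/-- A multiplicative subset of `R` containing `1`. -/
def IsMultSubset {R : Type*} [CommRing R] (S : Set R) : Prop :=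
  (1 : R) ∈ S ∧ ∀ a ∈ S, ∀ b ∈ S, a * b ∈ S

/-- `I` is a `φ`-`δ`-`S`-primary ideal of `R` associated to `s ∈ S`:
`I` is proper, disjoint from `S`, and whenever `a * b ∈ I \ φ I`
then `s * a ∈ I` or `s * b ∈ δ I`. -/
def IsPhiDeltaSPrimary {R : Type*} [CommRing R] (φ δ : Ideal R → Ideal R)
    (S : Set R) (s : R) (I : Ideal R) : Prop :=
  I ≠ ⊤ ∧ (I : Set R) ∩ S = ∅ ∧
    ∀ a b : R, a * b ∈ I → a * b ∉ φ I → s * a ∈ I ∨ s * b ∈ δ I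

/-- `I` is a `δ`-`S`-primary ideal of `R` associated to `s ∈ S`. -/
def IsDeltaSPrimary {R : Type*} [CommRing R] (δ : Ideal R → Ideal R)
    (S : Set R) (s : R) (I : Ideal R) : Prop :=
  I ≠ ⊤ ∧ (I : Set R) ∩ S = ∅ ∧
    ∀ a b : R, a * b ∈ I → s * a ∈ I ∨ s * b ∈ δ I

/-- The colon ideal `(I : x) = {r : R | r * x ∈ I}`. -/
def eltColon {R : Type*} [CommRing R] (I : Ideal R) (x : R) : Ideal R :=
  Submodule.colon I (Ideal.span {x})

theorem mem_eltColon_iff {R : Type*} [CommRing R] (I : Ideal R) (s r : R) :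
    r ∈ eltColon I s ↔ s * r ∈ I := by
  unfold eltColon
  rw [Submodule.colon_span, Submodule.mem_colon_singleton, smul_eq_mul, mul_comm]

/-- Here `key` is the `φ`-`δ`-`S`-primary condition after `δ I` has been replaced by `I`, as the
equality of colon ideals permits. -/
theorem mul_mem_phi_of_not_mem {R : Type*} [CommRing R] {φ : Ideal R → Ideal R} {s : R}
    {I : Ideal R} (key : ∀ a b : R, a * b ∈ I → a * b ∉ φ I → s * a ∈ I ∨ s * b ∈ I)
    {b c x : R} (hbc : b * c ∈ I) (hb : s * b ∉ I) (hc : s * c ∉ I) (hx : x ∈ I) :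
    b * x ∈ φ I := by
  have h1 : b * c ∈ φ I := by
    by_contra h
    exact (key b c hbc h).elim hb hc
  have h2 : b * (c + x) ∈ φ I := by
    by_contra h
    refine (key b (c + x) ?_ h).elim hb fun h' => hc ?_
    · rw [mul_add]
      exact I.add_mem hbc (I.mul_mem_left b hx)
    · rw [mul_add] at h'
      exact (I.add_mem_iff_left (I.mul_mem_left s hx)).1 h'
  rw [mul_add] at h2
  exact ((φ I).add_mem_iff_right h1).1 h2

theorem smul_ideal_mul_radical_phi_subset_phi
    {R : Type*} [CommRing R] [Nontrivial R]
    (δ φ : Ideal R → Ideal R)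
    (hδ : IsIdealExpansion δ) (hφ : IsIdealReduction φ)
    (S : Set R) (hS : IsMultSubset S) (s : R) (hs : s ∈ S)
    (I : Ideal R) (hI : IsPhiDeltaSPrimary φ δ S s I)
    (hcolon : eltColon I s = eltColon (δ I) s)
    (hnot : ¬ IsDeltaSPrimary δ S s I) :
    ∀ x ∈ I, ∀ a ∈ (φ I).radical, s * (x * a) ∈ φ I := by
  obtain ⟨hne, hdisj, hprim⟩ := hI
  have hpow : ∀ k, s ^ (k + 1) ∉ I := by
    intro k hk
    have hsk : s ^ (k + 1) ∈ S := by
      clear hk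
      induction k with
      | zero => simpa using hs
      | succ k ih => rw [pow_succ]; exact hS.2 _ ih _ hs
    exact Set.eq_empty_iff_forall_notMem.1 hdisj _ ⟨hk, hsk⟩
  have key : ∀ a b : R, a * b ∈ I → a * b ∉ φ I → s * a ∈ I ∨ s * b ∈ I := by
    intro a b h1 h2
    refine (hprim a b h1 h2).imp id fun h => ?_
    rwa [← mem_eltColon_iff, hcolon, mem_eltColon_iff]
  obtain ⟨p, q, hpq, hp, hq⟩ : ∃ p q : R, p * q ∈ I ∧ s * p ∉ I ∧ s * q ∉ I := by
    by_contra hcon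
    push Not at hcon
    refine hnot ⟨hne, hdisj, fun a b hab => ?_⟩
    by_cases ha : s * a ∈ I
    · exact Or.inl ha
    · exact Or.inr (hδ.1 I (hcon a b hab ha))
  have hsq : ∀ x ∈ I, ∀ y ∈ I, x * y ∈ φ I := by
    intro x hx y hy
    have hpx : s * (p + x) ∉ I := by
      rw [mul_add, I.add_mem_iff_left (I.mul_mem_left s hx)]
      exact hp
    have hprod : (p + x) * q ∈ I := by
      rw [add_mul]
      exact I.add_mem hpq (I.mul_mem_right q hx)
    have h1 := mul_mem_phi_of_not_mem key hprod hpx hq hy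
    have h2 := mul_mem_phi_of_not_mem key hpq hp hq hy
    rw [add_mul] at h1
    exact ((φ I).add_mem_iff_right h2).1 h1
  rintro x hx a ⟨n, hn⟩
  by_contra hcon
  have ha : s * a ∉ I := fun h => hcon <| by
    have := hsq x hx _ h
    rwa [mul_left_comm] at this
  have hsa : s * (s * a) ∉ I := fun h => hcon <| by
    have h1 : a * s ^ 2 ∈ I := by
      convert h using 1
      ring
    have h2 : s * s ^ 2 ∉ I := by
      rw [← pow_succ']
      exact hpow 2
    rw [mul_comm x a]
    exact (φ I).mul_mem_left s (mul_mem_phi_of_not_mem key h1 ha h2 hx)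
  have descent : ∀ m, s * a ^ m ∉ I := by
    intro m
    induction m with
    | zero => simpa using hpow 0
    | succ m ih =>
      intro h
      have h1 : s * a * a ^ m ∈ I := by
        convert h using 1
        ring
      apply hcon
      have h2 := mul_mem_phi_of_not_mem key h1 hsa ih hx
      convert h2 using 1
      ring
  exact descent n (I.mul_mem_left s (hφ.1 I hn))
end

section
/- Let I and J be φ-δ-S-primary ideals of R associated to the same s ∈ S such that (I : s) = (δ(I) : s) and (J : s) = (δ(J) : s). If neither I nor J is a δ-S-primary ideal of R associated to s, and φ(J) ⊆ φ(I), then sIJ ⊆ φ(I). -/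
theorem mem_phi_of_witness {R : Type*} [CommRing R] {φ δ : Ideal R → Ideal R} {S : Set R} {s : R}
    {I : Ideal R} (hI : IsPhiDeltaSPrimary φ δ S s I) {a b : R} (hab : a * b ∈ I)
    (ha : s * a ∉ I) (hb : s * b ∉ δ I) : a * b ∈ φ I := by
  by_contra h
  exact (hI.2.2 a b hab h).elim ha hb

theorem add_witness_mem_phi {R : Type*} [CommRing R] {φ δ : Ideal R → Ideal R} {S : Set R} {s : R}
    {I : Ideal R} (hδ : IsIdealExpansion δ) (hI : IsPhiDeltaSPrimary φ δ S s I) {a b : R}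
    (hab : a * b ∈ I) (ha : s * a ∉ I) (hb : s * b ∉ δ I) {x y : R} (hx : x ∈ I) (hy : y ∈ I) :
    (a + x) * (b + y) ∈ φ I := by
  refine mem_phi_of_witness hI ?_ ?_ ?_
  · have h : (a + x) * (b + y) = a * b + (a + x) * y + b * x := by ring
    rw [h]
    exact I.add_mem (I.add_mem hab (I.mul_mem_left _ hy)) (I.mul_mem_left _ hx)
  · rwa [mul_add, I.add_mem_iff_left (I.mul_mem_left _ hx)]
  · rwa [mul_add, (δ I).add_mem_iff_left ((δ I).mul_mem_left _ (hδ.1 I hy))]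

theorem mul_mem_phi_of_witness {R : Type*} [CommRing R] {φ δ : Ideal R → Ideal R} {S : Set R}
    {s : R} {I : Ideal R} (hδ : IsIdealExpansion δ) (hI : IsPhiDeltaSPrimary φ δ S s I) {a b : R}
    (hab : a * b ∈ I) (ha : s * a ∉ I) (hb : s * b ∉ δ I) {y : R} (hy : y ∈ I) :
    a * y ∈ φ I := by
  have h := add_witness_mem_phi hδ hI hab ha hb I.zero_mem hy
  rwa [add_zero, mul_add, (φ I).add_mem_iff_right (mem_phi_of_witness hI hab ha hb)] at h

theorem mul_self_mem_phi {R : Type*} [CommRing R] {φ δ : Ideal R → Ideal R} {S : Set R} {s : R}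
    {I : Ideal R} (hδ : IsIdealExpansion δ) (hI : IsPhiDeltaSPrimary φ δ S s I)
    (hnot : ¬ IsDeltaSPrimary δ S s I) {x y : R} (hx : x ∈ I) (hy : y ∈ I) : x * y ∈ φ I := by
  obtain ⟨a, b, hab, ha, hb⟩ : ∃ a b : R, a * b ∈ I ∧ s * a ∉ I ∧ s * b ∉ δ I := by
    by_contra! h
    exact hnot ⟨hI.1, hI.2.1, fun a b hab => or_iff_not_imp_left.2 (h a b hab)⟩
  have h₁ := add_witness_mem_phi hδ hI hab ha hb hx hy
  have h₂ := add_witness_mem_phi hδ hI hab ha hb hx I.zero_mem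
  have h₃ := mul_mem_phi_of_witness hδ hI hab ha hb hy
  have h : x * y = (a + x) * (b + y) - (a + x) * (b + 0) - a * y := by ring
  rw [h]
  exact (φ I).sub_mem ((φ I).sub_mem h₁ h₂) h₃

theorem mem_eltColon {R : Type*} [CommRing R] {I : Ideal R} {x r : R} :
    r ∈ eltColon I x ↔ x * r ∈ I := by
  rw [eltColon, Ideal.mem_colon_span_singleton, mul_comm]

theorem smul_mul_subset_phi_of_two_primary
    {R : Type*} [CommRing R] [Nontrivial R]
    (δ φ : Ideal R → Ideal R)
    (hδ : IsIdealExpansion δ) (hφ : IsIdealReduction φ)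
    (S : Set R) (hS : IsMultSubset S) (s : R) (hs : s ∈ S)
    (I J : Ideal R)
    (hI : IsPhiDeltaSPrimary φ δ S s I) (hJ : IsPhiDeltaSPrimary φ δ S s J)
    (hcolonI : eltColon I s = eltColon (δ I) s)
    (hcolonJ : eltColon J s = eltColon (δ J) s)
    (hnotI : ¬ IsDeltaSPrimary δ S s I) (hnotJ : ¬ IsDeltaSPrimary δ S s J)
    (hφJI : φ J ≤ φ I) :
    ∀ x ∈ I, ∀ y ∈ J, s * (x * y) ∈ φ I := by
  intro x hx y hy
  have hyy : y * y ∈ φ I := hφJI (mul_self_mem_phi hδ hJ hnotJ hy hy)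
  by_cases hsy : s * y ∈ I
  · rw [mul_left_comm]
    exact mul_self_mem_phi hδ hI hnotI hx hsy
  · have hsy' : s * y ∉ δ I := by
      rwa [← mem_eltColon, ← hcolonI, mem_eltColon]
    rw [mul_comm x y]
    exact (φ I).mul_mem_left s (mul_mem_phi_of_witness hδ hI (hφ.1 I hyy) hsy hsy' hx)
end
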